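/- arXiv:2009.11479 — 3 statements merged into one kernel-verified Lean document; each statement's English description precedes it below -/
import Mathlib

section
/- Let p ≥ 1 be an integer and define h_p : ℝ → ℝ by h_p(x) = max(0, p·x) + Σ_{i=2}^{p} (−1)^{i−1}·max(0, 2p·x − 2(i−1)). Then for every integer t with 0 ≤ t ≤ p − 1 and every x ∈ [t/p, (t+1)/p]: if t is even then h_p(x) = p·x − t, and if t is odd then h_p(x) = t + 1 − p·x. -/
/-- The one-dimensional sawtooth map from the proof of Lemma 2:
`h_p(x) = max(0, p·x) + Σ_{i=2}^{p} (−1)^{i−1} · max(0, 2p·x − 2(i−1))`. -/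
noncomputable def sawtooth (p : ℕ) (x : ℝ) : ℝ :=
  max 0 (p * x) + ∑ i ∈ Finset.Icc 2 p, (-1 : ℝ) ^ (i - 1) * max 0 (2 * p * x - 2 * ((i : ℝ) - 1))

theorem sum_Icc_mul_max_zero_of_antitone {R : Type*} [NonUnitalNonAssocSemiring R] [LinearOrder R]
    {f : ℕ → R} (hf : Antitone f) (c : ℕ → R) {m k n : ℕ} (hkn : k ≤ n)
    (hk : 0 ≤ f k) (hk' : f (k + 1) ≤ 0) :
    ∑ i ∈ Finset.Icc m n, c i * max 0 (f i) = ∑ i ∈ Finset.Icc m k, c i * f i := by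
  have active : ∀ i ∈ Finset.Icc m k, c i * f i = c i * max 0 (f i) := fun i hi ↦ by
    rw [max_eq_right (hk.trans (hf (Finset.mem_Icc.1 hi).2))]
  have inactive : ∀ i ∈ Finset.Icc m n, i ∉ Finset.Icc m k → c i * max 0 (f i) = 0 := by
    intro i hi hik
    have hki : k + 1 ≤ i := by
      rw [Finset.mem_Icc] at hi hik
      omega
    rw [max_eq_left ((hf hki).trans hk'), mul_zero]
  rw [Finset.sum_congr rfl active,
    Finset.sum_subset (Finset.Icc_subset_Icc_right hkn) inactive]

theorem add_sum_Icc_neg_one_pow_mul_eq {K : Type*} [Field K] [NeZero (2 : K)] (y : K) (t : ℕ) :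
    y + ∑ i ∈ Finset.Icc 2 (t + 1), (-1 : K) ^ (i - 1) * (2 * y - 2 * ((i : K) - 1)) =
      1 / 2 + (-1) ^ t * (y - (t + 1 / 2)) := by
  induction t with
  | zero => simp
  | succ t ih =>
    rw [Finset.sum_Icc_succ_top (by omega), ← add_assoc, ih, Nat.add_sub_cancel]
    push_cast
    field_simp
    ring

/-- With `y = p * x`, exactly the first `t + 1` units are active on `[t, t + 1]`; their slopes
`1, -2, 2, -2, …` add up to `(-1) ^ t`, and the resulting line crosses height `1 / 2` at
the midpoint `t + 1 / 2`. -/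
theorem sawtooth_eq_of_mem_Icc {p t : ℕ} (htp : t < p) {x : ℝ}
    (hx : (p * x : ℝ) ∈ Set.Icc (t : ℝ) (t + 1)) :
    sawtooth p x = 1 / 2 + (-1) ^ t * (p * x - (t + 1 / 2)) := by
  obtain ⟨ht, ht'⟩ := hx
  have px_nonneg : 0 ≤ p * x := t.cast_nonneg.trans ht
  have antitone_preactivation : Antitone fun i : ℕ ↦ 2 * p * x - 2 * ((i : ℝ) - 1) := by
    intro i j hij
    dsimp only
    gcongr
  rw [sawtooth, max_eq_right px_nonneg,
    sum_Icc_mul_max_zero_of_antitone antitone_preactivation _ (Nat.succ_le_of_lt htp)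
      (by push_cast; linarith) (by push_cast; linarith)]
  simpa only [mul_assoc] using add_sum_Icc_neg_one_pow_mul_eq (p * x) t

/-- On each interval `[t/p, (t+1)/p]` (for `0 ≤ t ≤ p−1`) the sawtooth `h_p` is affine:
`h_p(x) = p·x − t` if `t` is even and `h_p(x) = t + 1 − p·x` if `t` is odd. -/
theorem sawtooth_affine_on_pieces (p : ℕ) (hp : 1 ≤ p) :
    ∀ t : ℕ, t ≤ p - 1 → ∀ x ∈ Set.Icc ((t : ℝ) / p) (((t : ℝ) + 1) / p),
      (Even t → sawtooth p x = p * x - t) ∧ (Odd t → sawtooth p x = t + 1 - p * x) := by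
  intro t ht x ⟨hx, hx'⟩
  have p_pos : (0 : ℝ) < p := Nat.cast_pos.2 hp
  have px_mem : (p * x : ℝ) ∈ Set.Icc (t : ℝ) (t + 1) :=
    ⟨(div_le_iff₀' p_pos).1 hx, (le_div_iff₀' p_pos).1 hx'⟩
  rw [sawtooth_eq_of_mem_Icc (Nat.lt_of_le_sub_one hp ht) px_mem]
  constructor <;> intro parity <;> rw [parity.neg_one_pow] <;> ring
end

section
/- Let p ≥ 1 be an integer and define h_p : ℝ → ℝ by h_p(x) = max(0, p·x) + Σ_{i=2}^{p} (−1)^{i−1}·max(0, 2p·x − 2(i−1)). Then for every integer t with 0 ≤ t ≤ p − 1, the image of the interval [t/p, (t+1)/p] under h_p equals [0, 1]; in particular, h_p maps [0, 1] onto [0, 1]. -/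
/-!
Put `y = p x`. For `t ≤ y ≤ t + 1` only the ReLU units with `i ≤ t + 1` contribute, and each of them
is linear there. The unit `i = t + 2`, which sets in at `y = t + 1`, has slope `±2` in `y` and thus
reverses the slope `∓1` of the previous piece, so the pieces are alternately `y - t` and
`1 - (y - t)`. Each of these two functions maps its region onto `[0, 1]`.
-/

theorem biUnion_Ico_Icc_map_succ {α β : Type*} [LinearOrder α] [SuccOrder α]
    [IsSuccArchimedean α] [LinearOrder β] {f : α → β} (hf : Monotone f) {m n : α} (hmn : m < n) :
    ⋃ i ∈ Set.Ico m n, Set.Icc (f i) (f (Order.succ i)) = Set.Icc (f m) (f n) := by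
  apply Set.Subset.antisymm
  · exact Set.iUnion₂_subset fun i hi =>
      Set.Icc_subset_Icc (hf hi.1) (hf (Order.succ_le_of_lt hi.2))
  · rw [← Set.Ioc_insert_left (hf hmn.le), Set.insert_subset_iff,
      ← hf.biUnion_Ico_Ioc_map_succ m n]
    exact ⟨Set.mem_biUnion (Set.left_mem_Ico.2 hmn) (Set.left_mem_Icc.2 (hf (Order.le_succ m))),
      Set.iUnion₂_mono fun _ _ => Set.Ioc_subset_Icc_self⟩

theorem biUnion_Icc_div_eq_Icc_zero_one {K : Type*} [Field K] [LinearOrder K]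
    [IsStrictOrderedRing K] {p : ℕ} (hp : 0 < p) :
    ⋃ t ∈ Set.Ico 0 p, Set.Icc ((t : K) / p) (((t : K) + 1) / p) = Set.Icc 0 1 := by
  have hmono : Monotone fun t : ℕ => (t : K) / p :=
    Nat.mono_cast.div_const (Nat.cast_nonneg p)
  have hp' : (p : K) ≠ 0 := Nat.cast_ne_zero.2 hp.ne'
  simpa [hp'] using biUnion_Ico_Icc_map_succ hmono hp

theorem image_mul_sub_Icc_div {K : Type*} [Field K] [LinearOrder K] [IsStrictOrderedRing K]
    {a : K} (ha : 0 < a) (b : K) :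
    (fun x => a * x - b) '' Set.Icc (b / a) ((b + 1) / a) = Set.Icc 0 1 := by
  simpa [← sub_eq_add_neg, mul_div_cancel₀, ha.ne'] using
    Set.image_affine_Icc' ha (-b) (b / a) ((b + 1) / a)

theorem sum_mul_max_zero_eq_sum_of_subset {ι R : Type*} [NonUnitalNonAssocSemiring R]
    [LinearOrder R] {s u : Finset ι} (hsu : s ⊆ u) (c : ι → R) {f : ι → R}
    (hpos : ∀ i ∈ s, 0 ≤ f i) (hneg : ∀ i ∈ u, i ∉ s → f i ≤ 0) :
    ∑ i ∈ u, c i * max 0 (f i) = ∑ i ∈ s, c i * f i :=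
  calc ∑ i ∈ u, c i * max 0 (f i)
      = ∑ i ∈ s, c i * max 0 (f i) := (Finset.sum_subset hsu fun i hi his => by
        rw [max_eq_left (hneg i hi his), mul_zero]).symm
    _ = ∑ i ∈ s, c i * f i := Finset.sum_congr rfl fun i hi => by
        rw [max_eq_right (hpos i hi)]

theorem add_sum_Icc_neg_one_pow_mul_eq_ite_even {R : Type*} [CommRing R] (y : R) (t : ℕ) :
    y + ∑ i ∈ Finset.Icc 2 (t + 1), (-1 : R) ^ (i - 1) * (2 * y - 2 * ((i : R) - 1)) =
      if Even t then y - t else 1 - (y - t) := by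
  induction t with
  | zero => simp
  | succ t ih =>
    rw [Finset.sum_Icc_succ_top (by lia), ← add_assoc, ih, Nat.add_sub_cancel]
    rcases t.even_or_odd with ht | ht
    · rw [if_pos ht, if_neg (Nat.not_even_iff_odd.2 ht.add_one), ht.add_one.neg_one_pow]
      push_cast
      ring
    · rw [if_neg (Nat.not_even_iff_odd.2 ht), if_pos ht.add_one, ht.add_one.neg_one_pow]
      push_cast
      ring

theorem sawtooth_eq_ite_even {p t : ℕ} (ht : t < p) {x : ℝ}
    (hx : x ∈ Set.Icc ((t : ℝ) / p) (((t : ℝ) + 1) / p)) :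
    sawtooth p x = if Even t then p * x - t else 1 - (p * x - t) := by
  have hp : (0 : ℝ) < p := Nat.cast_pos.2 (Nat.zero_lt_of_lt ht)
  have hlower : (t : ℝ) ≤ p * x := (div_le_iff₀' hp).1 hx.1
  have hupper : p * x ≤ t + 1 := (le_div_iff₀' hp).1 hx.2
  have hactive : ∀ i ∈ Finset.Icc 2 (t + 1), 0 ≤ 2 * (p * x) - 2 * ((i : ℝ) - 1) := by
    intro i hi
    have : (i : ℝ) ≤ t + 1 := mod_cast (Finset.mem_Icc.1 hi).2
    linarith
  have hinactive : ∀ i ∈ Finset.Icc 2 p, i ∉ Finset.Icc 2 (t + 1) →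
      2 * (p * x) - 2 * ((i : ℝ) - 1) ≤ 0 := by
    intro i hi hit
    have : (t : ℝ) + 2 ≤ i := by
      rw [Finset.mem_Icc] at hi hit
      exact_mod_cast (by lia : t + 2 ≤ i)
    linarith
  rw [← add_sum_Icc_neg_one_pow_mul_eq_ite_even, sawtooth,
    max_eq_right ((Nat.cast_nonneg t).trans hlower)]
  simp only [mul_assoc (2 : ℝ)]
  rw [sum_mul_max_zero_eq_sum_of_subset (Finset.Icc_subset_Icc_right ht) _ hactive hinactive]

theorem sawtooth_image_Icc_div {p t : ℕ} (ht : t < p) :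
    sawtooth p '' Set.Icc ((t : ℝ) / p) (((t : ℝ) + 1) / p) = Set.Icc 0 1 := by
  have haffine := image_mul_sub_Icc_div (Nat.cast_pos.2 (Nat.zero_lt_of_lt ht)) (t : ℝ)
  rw [Set.image_congr fun _ => sawtooth_eq_ite_even ht]
  split_ifs
  · exact haffine
  · rw [← Set.image_image (fun y : ℝ => 1 - y), haffine, Set.image_const_sub_Icc, sub_self,
      sub_zero]

/-- The sawtooth `h_p` identifies each of its linear regions `[t/p, (t+1)/p]`
(for `0 ≤ t ≤ p−1`) onto the common image `[0, 1]`; in particular it maps `[0,1]` onto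
`[0,1]`. -/
theorem sawtooth_image_pieces (p : ℕ) (hp : 1 ≤ p) :
    (∀ t : ℕ, t ≤ p - 1 →
      sawtooth p '' Set.Icc ((t : ℝ) / p) (((t : ℝ) + 1) / p) = Set.Icc (0 : ℝ) 1) ∧
    sawtooth p '' Set.Icc (0 : ℝ) 1 = Set.Icc (0 : ℝ) 1 := by
  have hpiece : ∀ t ∈ Set.Ico 0 p,
      sawtooth p '' Set.Icc ((t : ℝ) / p) (((t : ℝ) + 1) / p) = Set.Icc 0 1 :=
    fun t ht => sawtooth_image_Icc_div ht.2
  refine ⟨fun t ht => hpiece t ⟨t.zero_le, by lia⟩, ?_⟩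
  calc sawtooth p '' Set.Icc 0 1
      = ⋃ t ∈ Set.Ico 0 p, sawtooth p '' Set.Icc ((t : ℝ) / p) (((t : ℝ) + 1) / p) := by
        rw [← biUnion_Icc_div_eq_Icc_zero_one hp, Set.image_iUnion₂]
    _ = ⋃ t ∈ Set.Ico 0 p, Set.Icc 0 1 := Set.iUnion₂_congr hpiece
    _ = Set.Icc 0 1 := Set.biUnion_const (Set.nonempty_Ico.2 hp) _
end

section
/- Let p ≥ 1 and k ≥ 1 be integers and define h_p : ℝ → ℝ by h_p(x) = max(0, p·x) + Σ_{i=2}^{p} (−1)^{i−1}·max(0, 2p·x − 2(i−1)). Let h_p^[k] denote the k-fold composition of h_p with itself. Then for every integer t with 0 ≤ t ≤ p^k − 1 and every x ∈ [t/p^k, (t+1)/p^k]: if t is even then h_p^[k](x) = p^k·x − t, and if t is odd then h_p^[k](x) = t + 1 − p^k·x. -/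
open Finset

section AddCircleNorm

variable {T : ℝ}

lemma coe_norm_eq_or_eq_neg (u : AddCircle T) :
    ((‖u‖ : ℝ) : AddCircle T) = u ∨ ((‖u‖ : ℝ) : AddCircle T) = -u := by
  induction u using QuotientAddGroup.induction_on with | H x
  have coe_sub_round : ((x - round (T⁻¹ * x) * T : ℝ) : AddCircle T) = x := by
    rw [← zsmul_eq_mul, AddCircle.coe_sub, AddCircle.coe_zsmul, AddCircle.coe_period, smul_zero,
      sub_zero]
  rw [AddCircle.norm_eq]
  rcases abs_choice (x - round (T⁻¹ * x) * T) with h | h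
  · exact .inl (by rw [h, coe_sub_round])
  · exact .inr (by rw [h, AddCircle.coe_neg, coe_sub_round])

lemma norm_nsmul_coe_norm (n : ℕ) (u : AddCircle T) :
    ‖n • ((‖u‖ : ℝ) : AddCircle T)‖ = ‖n • u‖ := by
  rcases coe_norm_eq_or_eq_neg u with h | h
  · rw [h]
  · rw [h, smul_neg, norm_neg]

lemma norm_add_coe_half_period (hT : 0 < T) (u : AddCircle T) :
    ‖u + ((T / 2 : ℝ) : AddCircle T)‖ = T / 2 - ‖u‖ := by
  have norm_le : ‖u‖ ≤ T / 2 := by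
    simpa only [abs_of_pos hT] using AddCircle.norm_le_half_period T hT.ne' (x := u)
  have abs_sub : |T / 2 - ‖u‖| = T / 2 - ‖u‖ := abs_of_nonneg (sub_nonneg.2 norm_le)
  have neg_half_period : -((T / 2 : ℝ) : AddCircle T) = ((T / 2 : ℝ) : AddCircle T) := by
    rw [neg_eq_iff_add_eq_zero, ← AddCircle.coe_add, add_halves, AddCircle.coe_period]
  calc ‖u + ((T / 2 : ℝ) : AddCircle T)‖
      = ‖((T / 2 - ‖u‖ : ℝ) : AddCircle T)‖ := by
        rw [AddCircle.coe_sub]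
        rcases coe_norm_eq_or_eq_neg u with h | h
        · rw [h, norm_sub_rev, sub_eq_add_neg, neg_half_period]
        · rw [h, sub_neg_eq_add, add_comm]
    _ = |T / 2 - ‖u‖| := by
        rw [AddCircle.norm_coe_eq_abs_iff T hT.ne', abs_sub, abs_of_pos hT]
        exact sub_le_self _ (norm_nonneg u)
    _ = T / 2 - ‖u‖ := abs_sub

end AddCircleNorm

/-- The triangle wave of period `2` and range `[0, 1]`: the distance from `y` to the nearest even
integer, encoded as the norm on `ℝ / 2ℤ`. On `[0, 1]` it gives `h_p x` as its value at `p * x`. -/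
noncomputable def triangleWave (y : ℝ) : ℝ :=
  ‖(y : AddCircle (2 : ℝ))‖

lemma triangleWave_mem_Icc (y : ℝ) : triangleWave y ∈ Set.Icc 0 1 :=
  ⟨norm_nonneg _, by
    simpa [triangleWave] using AddCircle.norm_le_half_period 2 two_ne_zero (x := (y : AddCircle _))⟩

lemma triangleWave_of_mem_Icc {y : ℝ} (hy : y ∈ Set.Icc 0 1) : triangleWave y = y := by
  rw [triangleWave, (AddCircle.norm_coe_eq_abs_iff 2 two_ne_zero).2] <;>
    simp [abs_of_nonneg hy.1, hy.2]

lemma triangleWave_periodic : Function.Periodic triangleWave 2 := fun y ↦ by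
  rw [triangleWave, AddCircle.coe_add_period, triangleWave]

lemma triangleWave_add_one (y : ℝ) : triangleWave (y + 1) = 1 - triangleWave y := by
  simpa [triangleWave] using norm_add_coe_half_period two_pos (y : AddCircle (2 : ℝ))

lemma triangleWave_natCast_mul_triangleWave (n : ℕ) (y : ℝ) :
    triangleWave (n * triangleWave y) = triangleWave (n * y) := by
  simpa only [triangleWave, ← nsmul_eq_mul, AddCircle.coe_nsmul] using
    norm_nsmul_coe_norm n (y : AddCircle (2 : ℝ))

lemma triangleWave_of_even {m : ℤ} (hm : Even m) {y : ℝ} (hy : y ∈ Set.Icc (m : ℝ) (m + 1)) :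
    triangleWave y = y - m := by
  obtain ⟨r, rfl⟩ := hm
  have shift : y - r • (2 : ℝ) = y - (r + r : ℤ) := by
    push_cast [zsmul_eq_mul]
    ring
  rw [← triangleWave_periodic.sub_zsmul_eq r, shift,
    triangleWave_of_mem_Icc ⟨by linarith [hy.1], by linarith [hy.2]⟩]

lemma triangleWave_of_odd {m : ℤ} (hm : Odd m) {y : ℝ} (hy : y ∈ Set.Icc (m : ℝ) (m + 1)) :
    triangleWave y = m + 1 - y := by
  obtain ⟨r, rfl⟩ := hm
  have hy' : y - 1 ∈ Set.Icc ((2 * r : ℤ) : ℝ) ((2 * r : ℤ) + 1) := by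
    push_cast at hy ⊢
    exact ⟨by linarith [hy.1], by linarith [hy.2]⟩
  rw [← sub_add_cancel y 1, triangleWave_add_one, triangleWave_of_even (even_two_mul r) hy']
  push_cast
  ring

-- Removing the first ramp leaves the alternating sum at `y - 1` with its sign reversed, which
-- matches `triangleWave y = 1 - triangleWave (y - 1)`.
lemma add_sum_ramps_eq_triangleWave (n : ℕ) {y : ℝ} (hy : y ∈ Set.Icc (0 : ℝ) (n + 1)) :
    y + ∑ j ∈ range n, (-1 : ℝ) ^ (j + 1) * max 0 (2 * y - 2 * (j + 1)) = triangleWave y := by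
  induction n generalizing y with
  | zero => simp [triangleWave_of_mem_Icc (y := y) (by simpa using hy)]
  | succ n ih =>
    rcases le_total y 1 with hy₁ | hy₁
    · have ramps_vanish : ∀ j ∈ range (n + 1),
          (-1 : ℝ) ^ (j + 1) * max 0 (2 * y - 2 * (j + 1)) = 0 := fun j _ ↦ by
        rw [max_eq_left (by linarith [j.cast_nonneg (α := ℝ)]), mul_zero]
      rw [sum_eq_zero ramps_vanish, add_zero, triangleWave_of_mem_Icc ⟨hy.1, hy₁⟩]
    · have hy' : y - 1 ∈ Set.Icc (0 : ℝ) (n + 1) := by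
        have := hy.2
        push_cast at this
        exact ⟨by linarith, by linarith⟩
      have tail_eq : ∑ j ∈ range n,
            (-1 : ℝ) ^ (j + 1 + 1) * max 0 (2 * y - 2 * ((j + 1 : ℕ) + 1)) =
          -∑ j ∈ range n, (-1 : ℝ) ^ (j + 1) * max 0 (2 * (y - 1) - 2 * (j + 1)) := by
        rw [← sum_neg_distrib]
        refine sum_congr rfl fun j _ ↦ ?_
        push_cast
        ring_nf
      have wave_eq : triangleWave y = 1 - triangleWave (y - 1) := by
        rw [← triangleWave_add_one, sub_add_cancel]
      rw [sum_range_succ', tail_eq, Nat.cast_zero, max_eq_right (by linarith), wave_eq, ← ih hy']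
      ring

lemma sawtooth_eq_triangleWave (p : ℕ) {x : ℝ} (hx : x ∈ Set.Icc 0 1) :
    sawtooth p x = triangleWave (p * x) := by
  have hpx : p * x ∈ Set.Icc (0 : ℝ) ((p - 1 : ℕ) + 1) := by
    refine ⟨mul_nonneg p.cast_nonneg hx.1, (mul_le_of_le_one_right p.cast_nonneg hx.2).trans ?_⟩
    exact_mod_cast (by lia : p ≤ p - 1 + 1)
  rw [← add_sum_ramps_eq_triangleWave (p - 1) hpx, sawtooth, max_eq_right hpx.1,
    ← Ico_add_one_right_eq_Icc, sum_Ico_eq_sum_range]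
  refine congrArg _ (sum_congr rfl fun j _ ↦ ?_)
  rw [show 2 + j - 1 = j + 1 by lia]
  push_cast
  ring_nf

lemma sawtooth_iterate_eq_triangleWave (p k : ℕ) {x : ℝ} (hx : x ∈ Set.Icc 0 1) :
    (sawtooth p)^[k] x = triangleWave (p ^ k * x) := by
  induction k with
  | zero => simp [triangleWave_of_mem_Icc hx]
  | succ k ih =>
    calc (sawtooth p)^[k + 1] x
        = sawtooth p (triangleWave (p ^ k * x)) := by rw [Function.iterate_succ_apply', ih]
      _ = triangleWave (p * triangleWave (p ^ k * x)) :=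
          sawtooth_eq_triangleWave p (triangleWave_mem_Icc _)
      _ = triangleWave (p ^ (k + 1) * x) := by
          rw [triangleWave_natCast_mul_triangleWave, pow_succ', mul_assoc]

/-- The `k`-fold composition of the sawtooth `h_p` with itself is the sawtooth of period
`p^k`: on each interval `[t/p^k, (t+1)/p^k]` (for `0 ≤ t ≤ p^k − 1`) it is affine, equal to
`p^k·x − t` if `t` is even and to `t + 1 − p^k·x` if `t` is odd. -/
theorem sawtooth_iterate_affine_on_pieces (p : ℕ) (hp : 1 ≤ p) (k : ℕ) (hk : 1 ≤ k) :
    ∀ t : ℕ, t ≤ p ^ k - 1 →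
      ∀ x ∈ Set.Icc ((t : ℝ) / (p : ℝ) ^ k) (((t : ℝ) + 1) / (p : ℝ) ^ k),
        (Even t → (sawtooth p)^[k] x = (p : ℝ) ^ k * x - t) ∧
        (Odd t → (sawtooth p)^[k] x = t + 1 - (p : ℝ) ^ k * x) := by
  intro t ht x hx
  have hpk : 0 < p ^ k := Nat.pow_pos hp
  have hpk' : (0 : ℝ) < (p : ℝ) ^ k := mod_cast hpk
  have ht' : (t : ℝ) + 1 ≤ (p : ℝ) ^ k := mod_cast (Nat.le_sub_one_iff_lt hpk).1 ht
  have hx₀₁ : x ∈ Set.Icc 0 1 :=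
    ⟨(by positivity : (0 : ℝ) ≤ t / (p : ℝ) ^ k).trans hx.1, hx.2.trans ((div_le_one hpk').2 ht')⟩
  have hpiece : (p : ℝ) ^ k * x ∈ Set.Icc ((t : ℤ) : ℝ) ((t : ℤ) + 1) :=
    ⟨(div_le_iff₀' hpk').1 hx.1, (le_div_iff₀' hpk').1 hx.2⟩
  rw [sawtooth_iterate_eq_triangleWave p k hx₀₁]
  exact ⟨fun h ↦ triangleWave_of_even (mod_cast h) hpiece,
    fun h ↦ triangleWave_of_odd (mod_cast h) hpiece⟩
end
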